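/- (Norm duality formula.) Let n ∈ ℕ, p⃗, q⃗ ∈ [1,∞]^n and α⃗ ∈ ℝⁿ. Then for every f ∈ Ė^{α⃗,p⃗}_{q⃗}(ℝⁿ), ‖f‖_{Ė^{α⃗,p⃗}_{q⃗}(ℝⁿ)} = sup{ ‖fg‖_{L¹(ℝⁿ)} : g measurable with ‖g‖_{Ė^{-α⃗,p⃗'}_{q⃗'}(ℝⁿ)} = 1 }. -/

import Mathlib

open MeasureTheory ENNReal Filter

noncomputable section

/-- The dyadic annulus `R_k = (-2^k, 2^k) \ (-2^(k-1), 2^(k-1))` in `ℝ`. -/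
def herzRing (k : ℤ) : Set ℝ :=
  Set.Ioo (-(2 : ℝ) ^ k) ((2 : ℝ) ^ k) \ Set.Ioo (-(2 : ℝ) ^ (k - 1)) ((2 : ℝ) ^ (k - 1))

/-- The `L^q` "norm" (valued in `ℝ≥0∞`) of an `ℝ≥0∞`-valued function on a set `s ⊆ ℝ`,
with the usual modification when `q = ∞`. -/
def lqNormOn (q : ℝ≥0∞) (s : Set ℝ) (g : ℝ → ℝ≥0∞) : ℝ≥0∞ :=
  if q = ∞ then essSup (s.indicator g) volume
  else (∫⁻ x in s, g x ^ q.toReal) ^ (1 / q.toReal)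

/-- The `l^p` norm over `ℤ` of an `ℝ≥0∞`-valued sequence, with the usual modification
when `p = ∞`. -/
def lpZNorm (p : ℝ≥0∞) (a : ℤ → ℝ≥0∞) : ℝ≥0∞ :=
  if p = ∞ then ⨆ k, a k
  else (∑' k : ℤ, a k ^ p.toReal) ^ (1 / p.toReal)

/-- The one-dimensional Herz norm `K^{α,p}_q` of an `ℝ≥0∞`-valued function on `ℝ`. -/
def herzNorm1 (α : ℝ) (p q : ℝ≥0∞) (g : ℝ → ℝ≥0∞) : ℝ≥0∞ :=
  lpZNorm p fun k => ENNReal.ofReal ((2 : ℝ) ^ ((k : ℝ) * α)) * lqNormOn q (herzRing k) g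

/-- The mixed-norm Herz norm on `ℝⁿ` of an `ℝ≥0∞`-valued function: the Herz norm
`K^{α_1,p_1}_{q_1}` is applied in the first variable, then `K^{α_2,p_2}_{q_2}` in the
second variable, …, and finally `K^{α_n,p_n}_{q_n}` in the last variable. -/
def mixedHerzNormE : (n : ℕ) → (Fin n → ℝ) → (Fin n → ℝ≥0∞) → (Fin n → ℝ≥0∞) →
    ((Fin n → ℝ) → ℝ≥0∞) → ℝ≥0∞
  | 0, _, _, _, f => f fun i => i.elim0
  | n + 1, α, p, q, f =>
    herzNorm1 (α (Fin.last n)) (p (Fin.last n)) (q (Fin.last n)) fun xlast =>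
      mixedHerzNormE n (Fin.init α) (Fin.init p) (Fin.init q) fun y => f (Fin.snoc y xlast)

/-- The mixed-norm Herz norm `‖f‖_{Ė^{α,p}_q(ℝⁿ)}` of a complex-valued function on `ℝⁿ`. -/
def herzNormC (n : ℕ) (α : Fin n → ℝ) (p q : Fin n → ℝ≥0∞) (f : (Fin n → ℝ) → ℂ) : ℝ≥0∞ :=
  mixedHerzNormE n α p q fun x => (‖f x‖₊ : ℝ≥0∞)

/-- `I_m = (-2^m, -2^{-m}] ∪ [2^{-m}, 2^m)`. -/
def herzI (m : ℕ) : Set ℝ :=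
  Set.Ioc (-(2 : ℝ) ^ (m : ℤ)) (-(2 : ℝ) ^ (-(m : ℤ))) ∪
    Set.Ico ((2 : ℝ) ^ (-(m : ℤ))) ((2 : ℝ) ^ (m : ℤ))

/-- `A_m = I_m^n ⊆ ℝⁿ`. -/
def herzA (n m : ℕ) : Set (Fin n → ℝ) := Set.univ.pi fun _ => herzI m

/-- The class `H(ℝⁿ)` of simple functions built from finitely many pairwise disjoint
parallelepipeds contained in some `A_m`. -/
def IsHSimple (n : ℕ) (f : (Fin n → ℝ) → ℂ) : Prop :=
  ∃ (m N : ℕ) (a : Fin N → ℂ) (E : Fin N → Fin n → Set ℝ),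
    (∀ k i, MeasurableSet (E k i)) ∧
    (∀ k, Set.univ.pi (E k) ⊆ herzA n m) ∧
    (Pairwise fun k l => Disjoint (Set.univ.pi (E k)) (Set.univ.pi (E l))) ∧
    f = fun x => ∑ k, (Set.univ.pi (E k)).indicator (fun _ => a k) x

/-- The Euclidean ball `B(x,r)` in `ℝⁿ`. -/
def eucBall (n : ℕ) (x : Fin n → ℝ) (r : ℝ) : Set (Fin n → ℝ) :=
  {y | ∑ i, (y i - x i) ^ 2 < r ^ 2}

/-- The (uncentered) maximal operator in the `k`-th variable. -/
def maxVar (n : ℕ) (k : Fin n) (g : (Fin n → ℝ) → ℝ≥0∞) : (Fin n → ℝ) → ℝ≥0∞ :=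
  fun x => ⨆ (a : ℝ) (b : ℝ) (_ : x k ∈ Set.Ioo a b),
    (volume (Set.Ioo a b))⁻¹ * ∫⁻ y in Set.Ioo a b, g (Function.update x k y)

/-- The centered Hardy–Littlewood maximal operator on `ℝⁿ`. -/
def centeredMax (n : ℕ) (g : (Fin n → ℝ) → ℝ≥0∞) : (Fin n → ℝ) → ℝ≥0∞ :=
  fun x => ⨆ (r : ℝ) (_ : 0 < r),
    (volume (eucBall n x r))⁻¹ * ∫⁻ y in eucBall n x r, g y

/-- The composition `M_n ∘ ⋯ ∘ M_1` of the maximal operators in each variable. -/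
def iteratedMax (n : ℕ) (g : (Fin n → ℝ) → ℝ≥0∞) : (Fin n → ℝ) → ℝ≥0∞ :=
  (List.ofFn fun k : Fin n => maxVar n k).foldl (fun h F => F h) g

/-- The iterated maximal operator `ℳ_t(f) = [M_n ⋯ M_1(|f|^t)]^{1/t}`. -/
def iterMaxPow (n : ℕ) (t : ℝ) (f : (Fin n → ℝ) → ℂ) : (Fin n → ℝ) → ℝ≥0∞ :=
  fun x => iteratedMax n (fun y => (‖f y‖₊ : ℝ≥0∞) ^ t) x ^ (1 / t)

/-- The `l^r`-Herz type mixed norm of a sequence of functions on `ℝⁿ`. -/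
def herzSeqNorm (n : ℕ) (r : ℝ≥0∞) (α : Fin n → ℝ) (p q : Fin n → ℝ≥0∞)
    (F : ℤ → (Fin n → ℝ) → ℂ) : ℝ≥0∞ :=
  mixedHerzNormE n α p q fun x => lpZNorm r fun j => (‖F j x‖₊ : ℝ≥0∞)

/-- `N` is a ball quasi-Banach function norm on (nonnegative extended-real-valued)
measurable functions on `ℝⁿ`. -/
def IsBQBFNorm (n : ℕ) (N : ((Fin n → ℝ) → ℝ≥0∞) → ℝ≥0∞) : Prop :=
  (∀ f : (Fin n → ℝ) → ℝ≥0∞, Measurable f → N f = 0 → f =ᵐ[volume] 0) ∧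
  (∀ f g : (Fin n → ℝ) → ℝ≥0∞, Measurable f → Measurable g →
    (∀ᵐ x ∂volume, g x ≤ f x) → N g ≤ N f) ∧
  (∀ (fm : ℕ → (Fin n → ℝ) → ℝ≥0∞) (f : (Fin n → ℝ) → ℝ≥0∞),
    (∀ m, Measurable (fm m)) → Measurable f →
    (∀ᵐ x ∂volume, Monotone (fun m => fm m x) ∧
      Tendsto (fun m => fm m x) atTop (nhds (f x))) →
    Monotone (fun m => N (fm m)) ∧ Tendsto (fun m => N (fm m)) atTop (nhds (N f))) ∧
  (∀ (x : Fin n → ℝ) (r : ℝ), 0 < r →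
    N ((eucBall n x r).indicator fun _ => (1 : ℝ≥0∞)) ≠ ∞)

/-- `N` is a ball Banach function norm: a ball quasi-Banach function norm that moreover
satisfies the triangle inequality and locally dominates the `L¹` norm. -/
def IsBallBanachNorm (n : ℕ) (N : ((Fin n → ℝ) → ℝ≥0∞) → ℝ≥0∞) : Prop :=
  IsBQBFNorm n N ∧
  (∀ f g : (Fin n → ℝ) → ℝ≥0∞, Measurable f → Measurable g → N (f + g) ≤ N f + N g) ∧
  (∀ (x : Fin n → ℝ) (r : ℝ), 0 < r → ∃ C : ℝ≥0∞, 0 < C ∧ C ≠ ∞ ∧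
    ∀ f : (Fin n → ℝ) → ℝ≥0∞, Measurable f → (∫⁻ y in eucBall n x r, f y) ≤ C * N f)

/-- The associate (Köthe dual) norm of a function norm `N`. -/
def assocNormOf (n : ℕ) (N : ((Fin n → ℝ) → ℝ≥0∞) → ℝ≥0∞)
    (f : (Fin n → ℝ) → ℝ≥0∞) : ℝ≥0∞ :=
  ⨆ (g : (Fin n → ℝ) → ℝ≥0∞) (_ : Measurable g) (_ : N g = 1), ∫⁻ x, f x * g x

/-- The `θ`-convexification of a function norm: `‖f‖_{X^θ} = ‖|f|^θ‖_X^{1/θ}`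
(here stated with `θ` in place of `1/p`, so `X^{1/p}` is `convexPow n (1/p) N`). -/
def convexPow (n : ℕ) (θ : ℝ) (N : ((Fin n → ℝ) → ℝ≥0∞) → ℝ≥0∞)
    (f : (Fin n → ℝ) → ℝ≥0∞) : ℝ≥0∞ :=
  N (fun x => f x ^ θ) ^ (1 / θ)

/-- The associate space norm of the mixed-norm Herz space, for complex-valued functions. -/
def herzAssocNormC (n : ℕ) (α : Fin n → ℝ) (p q : Fin n → ℝ≥0∞)
    (f : (Fin n → ℝ) → ℂ) : ℝ≥0∞ :=
  ⨆ (g : (Fin n → ℝ) → ℂ) (_ : Measurable g) (_ : herzNormC n α p q g = 1),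
    ∫⁻ x, (‖f x * g x‖₊ : ℝ≥0∞)

/-!
Call two function norms a dual pair if they satisfy Hölder's inequality and the first is the
supremum of the pairings with a sequence in the unit ball of the second, where the sequence can be
chosen measurably in a parameter. Conjugate Lebesgue norms form a dual pair, and the measurable
dependence makes the notion stable under mixed norms: one chooses norming functions for the inner
norm fibre by fibre and multiplies them by norming functions for the outer norm. Up to the null set
`{0}`, the Herz norm on `ℝ` is a weighted mixed `ℓ^p(L^q)` norm on `ℤ × ℝ`, restricted to the graph
of the map sending a point to the index of its annulus. Hence it has the dual Herz norm as partner,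
and the mixed-norm Herz spaces follow by induction on the dimension.
-/

universe u

/-- A function norm over `(X, μ)`: a homogeneous functional on `[0, ∞]`-valued functions which is
monotone up to `μ`-null sets and measurable along measurable families of functions. Neither the
triangle inequality nor definiteness is required. -/
structure IsFunctionNorm {X : Type u} [MeasurableSpace X] (μ : Measure X)
    (N : (X → ℝ≥0∞) → ℝ≥0∞) : Prop where
  mono_ae : ∀ {f g : X → ℝ≥0∞}, f ≤ᵐ[μ] g → N f ≤ N g
  const_mul : ∀ (c : ℝ≥0∞) {f : X → ℝ≥0∞}, Measurable f → N (fun x => c * f x) = c * N f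
  measurable_uncurry : ∀ {Y : Type u} [MeasurableSpace Y] {F : Y → X → ℝ≥0∞},
    Measurable (Function.uncurry F) → Measurable fun y => N (F y)

/-- Two function norms over `(X, μ)` in duality: they satisfy Hölder's inequality, and the first
one is recovered from the unit ball of the second. The functions recovering it are required to
depend measurably on a parameter, so that they can be chosen fibrewise in a mixed norm. -/
structure IsDualPair {X : Type u} [MeasurableSpace X] (μ : Measure X)
    (N N' : (X → ℝ≥0∞) → ℝ≥0∞) : Prop where
  isFunctionNorm : IsFunctionNorm μ N
  dual_isFunctionNorm : IsFunctionNorm μ N'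
  lintegral_mul_le : ∀ {f g : X → ℝ≥0∞}, Measurable f → Measurable g →
    ∫⁻ x, f x * g x ∂μ ≤ N f * N' g
  exists_norming : ∀ {Y : Type u} [MeasurableSpace Y] {F : Y → X → ℝ≥0∞},
    Measurable (Function.uncurry F) → ∃ G : ℕ → Y → X → ℝ≥0∞,
      (∀ k, Measurable (Function.uncurry (G k))) ∧ (∀ k y, N' (G k y) ≤ 1) ∧
      ∀ y, N (F y) ≤ ⨆ k, ∫⁻ x, F y x * G k y x ∂μ

/-- The mixed norm of a function on `Y × X`: `N` in the second variable, then `M` in the first. -/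
def mixedNorm {X Y : Type*} (M : (Y → ℝ≥0∞) → ℝ≥0∞) (N : (X → ℝ≥0∞) → ℝ≥0∞)
    (f : Y × X → ℝ≥0∞) : ℝ≥0∞ :=
  M fun y => N fun x => f (y, x)

section MeasurableSelection

variable {Y β : Type*} [MeasurableSpace Y] [MeasurableSpace β] [TopologicalSpace β]
  [BorelSpace β] [LinearOrder β] [OrderClosedTopology β] [SecondCountableTopology β]

theorem exists_measurable_index_eq_partialSups {I : ℕ → Y → β} (hI : ∀ k, Measurable (I k)) :
    ∃ σ : ℕ → Y → ℕ, (∀ k, Measurable (σ k)) ∧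
      ∀ k y, I (σ k y) y = partialSups (fun j => I j y) k := by
  have hattained (k : ℕ) (y : Y) : ∃ j, I j y = partialSups (fun j => I j y) k := by
    obtain ⟨j, -, hj⟩ := exists_partialSups_eq (fun j => I j y) k
    exact ⟨j, hj.symm⟩
  have hsup (k : ℕ) : Measurable fun y => partialSups (fun j => I j y) k := by
    induction k with
    | zero => simpa only [partialSups_zero] using hI 0
    | succ k ih => simpa only [partialSups_add_one] using ih.max (hI (k + 1))
  classical
  exact ⟨fun k y => Nat.find (hattained k y),
    fun k => measurable_find _ fun j => measurableSet_eq_fun (hI j) (hsup k),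
    fun k y => Nat.find_spec (hattained k y)⟩

end MeasurableSelection

section IteratedIntegral

variable {X Y : Type*} [MeasurableSpace X] [MeasurableSpace Y] {μ : Measure X} {ν : Measure Y}
  [SFinite μ]

theorem lintegral_iSup_lintegral_mul {f : Y × X → ℝ≥0∞} {g : ℕ → Y × X → ℝ≥0∞} {h : Y → ℝ≥0∞}
    (hf : Measurable f) (hg : ∀ k, Measurable (g k))
    (hmono : ∀ y, Monotone fun k => ∫⁻ x, f (y, x) * g k (y, x) ∂μ) (hh : Measurable h) :
    ∫⁻ y, (⨆ k, ∫⁻ x, f (y, x) * g k (y, x) ∂μ) * h y ∂ν =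
      ⨆ k, ∫⁻ z, f z * (h z.1 * g k z) ∂ν.prod μ := by
  have hfg (k : ℕ) : Measurable fun z => f z * g k z := hf.mul (hg k)
  simp only [ENNReal.iSup_mul]
  refine (lintegral_iSup (fun k => (hfg k).lintegral_prod_right'.mul hh)
    fun k l hkl y => mul_le_mul_left (hmono y hkl) (h y)).trans (iSup_congr fun k => ?_)
  have hfhg : Measurable fun z => f z * (h z.1 * g k z) :=
    hf.mul ((hh.comp measurable_fst).mul (hg k))
  rw [lintegral_prod _ hfhg.aemeasurable]
  refine lintegral_congr fun y => ?_
  refine (lintegral_mul_const (h y) ((hfg k).comp measurable_prodMk_left)).symm.trans ?_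
  exact lintegral_congr fun x => by simp only [Function.comp_apply]; ring

end IteratedIntegral

namespace IsFunctionNorm

variable {X Y : Type u} [MeasurableSpace X] [MeasurableSpace Y] {μ : Measure X} {ν : Measure Y}
  {N : (X → ℝ≥0∞) → ℝ≥0∞} {M : (Y → ℝ≥0∞) → ℝ≥0∞}

theorem mono (hN : IsFunctionNorm μ N) {f g : X → ℝ≥0∞} (hfg : f ≤ g) : N f ≤ N g :=
  hN.mono_ae (.of_forall hfg)

theorem congr_ae (hN : IsFunctionNorm μ N) {f g : X → ℝ≥0∞} (hfg : f =ᵐ[μ] g) : N f = N g :=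
  le_antisymm (hN.mono_ae hfg.le) (hN.mono_ae hfg.symm.le)

theorem prod [SFinite μ] (hM : IsFunctionNorm ν M) (hN : IsFunctionNorm μ N) :
    IsFunctionNorm (ν.prod μ) (mixedNorm M N) where
  mono_ae hfg := hM.mono_ae <| (Measure.ae_ae_of_ae_prod hfg).mono fun _ hy => hN.mono_ae hy
  const_mul c f hf := by
    have hslice (y : Y) : N (fun x => c * f (y, x)) = c * N fun x => f (y, x) :=
      hN.const_mul c (hf.comp measurable_prodMk_left)
    simp only [mixedNorm, hslice]
    exact hM.const_mul c (hN.measurable_uncurry hf)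
  measurable_uncurry {T _ F} hF := by
    have hinner : Measurable fun z : T × Y => N fun x => F z.1 (z.2, x) :=
      hN.measurable_uncurry <| hF.comp <|
        (measurable_fst.comp measurable_fst).prodMk
          ((measurable_snd.comp measurable_fst).prodMk measurable_snd)
    exact hM.measurable_uncurry hinner

end IsFunctionNorm

namespace IsDualPair

variable {X Y : Type u} [MeasurableSpace X] [MeasurableSpace Y] {μ : Measure X} {ν : Measure Y}
  {N N' : (X → ℝ≥0∞) → ℝ≥0∞} {M M' : (Y → ℝ≥0∞) → ℝ≥0∞}

theorem exists_monotone_norming [SFinite μ] (h : IsDualPair μ N N') {F : Y → X → ℝ≥0∞}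
    (hF : Measurable (Function.uncurry F)) :
    ∃ G : ℕ → Y → X → ℝ≥0∞, (∀ k, Measurable (Function.uncurry (G k))) ∧
      (∀ k y, N' (G k y) ≤ 1) ∧ (∀ y, Monotone fun k => ∫⁻ x, F y x * G k y x ∂μ) ∧
      ∀ y, N (F y) ≤ ⨆ k, ∫⁻ x, F y x * G k y x ∂μ := by
  obtain ⟨G, hG, hG_le, hF_le⟩ := h.exists_norming hF
  obtain ⟨σ, hσ, hσ_eq⟩ := exists_measurable_index_eq_partialSups
    (I := fun k y => ∫⁻ x, F y x * G k y x ∂μ) fun k => (hF.mul (hG k)).lintegral_prod_right'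
  refine ⟨fun k y => G (σ k y) y, fun k => ?_, fun k y => hG_le _ y, fun y => ?_, fun y => ?_⟩
  · have hjoint : Measurable fun z : ℕ × Y × X => G z.1 z.2.1 z.2.2 :=
      measurable_from_prod_countable_right hG
    exact hjoint.comp (((hσ k).comp measurable_fst).prodMk measurable_id)
  · simpa only [hσ_eq] using partialSups_monotone _
  · simpa only [hσ_eq, iSup_partialSups_eq] using hF_le y

theorem lintegral_mul_le_mixedNorm [SFinite μ] (hM : IsDualPair ν M M') (hN : IsDualPair μ N N')
    {f g : Y × X → ℝ≥0∞} (hf : Measurable f) (hg : Measurable g) :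
    ∫⁻ z, f z * g z ∂ν.prod μ ≤ mixedNorm M N f * mixedNorm M' N' g :=
  calc ∫⁻ z, f z * g z ∂ν.prod μ
      = ∫⁻ y, ∫⁻ x, f (y, x) * g (y, x) ∂μ ∂ν := lintegral_prod _ (hf.mul hg).aemeasurable
    _ ≤ ∫⁻ y, (N fun x => f (y, x)) * N' (fun x => g (y, x)) ∂ν :=
        lintegral_mono fun _ => hN.lintegral_mul_le (hf.comp measurable_prodMk_left)
          (hg.comp measurable_prodMk_left)
    _ ≤ _ := hM.lintegral_mul_le (hN.isFunctionNorm.measurable_uncurry hf)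
        (hN.dual_isFunctionNorm.measurable_uncurry hg)

theorem exists_norming_mixedNorm [SFinite μ] (hM : IsDualPair ν M M')
    (hN : IsDualPair μ N N') {T : Type u} [MeasurableSpace T] {F : T → Y × X → ℝ≥0∞}
    (hF : Measurable (Function.uncurry F)) :
    ∃ G : ℕ → T → Y × X → ℝ≥0∞, (∀ k, Measurable (Function.uncurry (G k))) ∧
      (∀ k t, mixedNorm M' N' (G k t) ≤ 1) ∧
      ∀ t, mixedNorm M N (F t) ≤ ⨆ k, ∫⁻ z, F t z * G k t z ∂ν.prod μ := by
  have hassoc : Measurable (Function.uncurry fun (z : T × Y) x => F z.1 (z.2, x)) :=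
    hF.comp MeasurableEquiv.prodAssoc.measurable
  obtain ⟨G, hG, hG_le, hG_mono, hF_le⟩ := hN.exists_monotone_norming hassoc
  obtain ⟨H, hH, hH_le, hN_le⟩ := hM.exists_norming (F := fun t y => N fun x => F t (y, x))
    (hN.isFunctionNorm.measurable_uncurry hassoc)
  have hG' (k : ℕ) : Measurable fun z : T × Y × X => G k (z.1, z.2.1) z.2.2 :=
    (hG k).comp MeasurableEquiv.prodAssoc.symm.measurable
  refine ⟨fun k t z => H k.unpair.1 t z.1 * G k.unpair.2 (t, z.1) z.2, fun k => ?_,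
    fun k t => ?_, fun t => ?_⟩
  · exact ((hH _).comp (measurable_fst.prodMk (measurable_fst.comp measurable_snd))).mul (hG' _)
  · refine le_trans (hM.dual_isFunctionNorm.mono fun y => ?_) (hH_le k.unpair.1 t)
    have hslice : Measurable (G k.unpair.2 (t, y)) := (hG _).comp measurable_prodMk_left
    exact (hN.dual_isFunctionNorm.const_mul _ hslice).trans_le (mul_le_of_le_one_right' (hG_le _ _))
  · calc mixedNorm M N (F t)
        ≤ ⨆ j, ∫⁻ y, (N fun x => F t (y, x)) * H j t y ∂ν := hN_le t
      _ ≤ ⨆ j, ∫⁻ y, (⨆ k, ∫⁻ x, F t (y, x) * G k (t, y) x ∂μ) * H j t y ∂ν := by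
          gcongr with j y
          exact hF_le (t, y)
      _ = ⨆ j, ⨆ k, ∫⁻ z, F t z * (H j t z.1 * G k (t, z.1) z.2) ∂ν.prod μ :=
          iSup_congr fun j => lintegral_iSup_lintegral_mul (hF.comp measurable_prodMk_left)
            (fun k => (hG' k).comp measurable_prodMk_left) (fun y => hG_mono (t, y))
            ((hH j).comp measurable_prodMk_left)
      _ = _ := (iSup_unpair fun j k =>
          ∫⁻ z, F t z * (H j t z.1 * G k (t, z.1) z.2) ∂ν.prod μ).symm

theorem prod [SFinite μ] (hM : IsDualPair ν M M') (hN : IsDualPair μ N N') :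
    IsDualPair (ν.prod μ) (mixedNorm M N) (mixedNorm M' N') where
  isFunctionNorm := hM.isFunctionNorm.prod hN.isFunctionNorm
  dual_isFunctionNorm := hM.dual_isFunctionNorm.prod hN.dual_isFunctionNorm
  lintegral_mul_le := hM.lintegral_mul_le_mixedNorm hN
  exists_norming := hM.exists_norming_mixedNorm hN

end IsDualPair

section Lebesgue

variable {X Y : Type*} [MeasurableSpace X] [MeasurableSpace Y] {μ : Measure X}

theorem eLpNorm_ennreal_const_mul (p c : ℝ≥0∞) {f : X → ℝ≥0∞} (hf : Measurable f) :
    eLpNorm (fun x => c * f x) p μ = c * eLpNorm f p μ := by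
  rcases eq_or_ne p 0 with rfl | hp_zero
  · simp only [eLpNorm_exponent_zero, mul_zero]
  rcases eq_or_ne p ∞ with rfl | hp_top
  · simp only [eLpNorm_exponent_top, eLpNormEssSup_eq_essSup_enorm, enorm_eq_self]
    exact ENNReal.essSup_const_mul
  have hp : 0 < p.toReal := ENNReal.toReal_pos hp_zero hp_top
  simp only [eLpNorm_eq_lintegral_rpow_enorm_toReal hp_zero hp_top, enorm_eq_self,
    ENNReal.mul_rpow_of_nonneg _ _ hp.le]
  rw [lintegral_const_mul _ (hf.pow_const _), ENNReal.mul_rpow_of_nonneg _ _ (by positivity),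
    ← ENNReal.rpow_mul, mul_one_div_cancel hp.ne', ENNReal.rpow_one]

theorem lt_essSup_iff_measure_pos {f : X → ℝ≥0∞} {c : ℝ≥0∞} :
    c < essSup f μ ↔ 0 < μ {x | c < f x} := by
  have hle : essSup f μ ≤ c ↔ ∀ᵐ x ∂μ, f x ≤ c :=
    ⟨fun h => (ENNReal.ae_le_essSup f).mono fun _ hx => hx.trans h, essSup_le_of_ae_le c⟩
  rw [← not_le, hle, ae_iff, pos_iff_ne_zero]
  simp only [not_le, ne_eq]

theorem measurable_eLpNorm_uncurry [SFinite μ] (p : ℝ≥0∞) {F : Y → X → ℝ≥0∞}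
    (hF : Measurable (Function.uncurry F)) : Measurable fun y => eLpNorm (F y) p μ := by
  rcases eq_or_ne p 0 with rfl | hp_zero
  · simpa only [eLpNorm_exponent_zero] using measurable_const
  rcases eq_or_ne p ∞ with rfl | hp_top
  · simp only [eLpNorm_exponent_top, eLpNormEssSup_eq_essSup_enorm, enorm_eq_self]
    refine measurable_of_Ioi fun c => ?_
    have hpreimage : (fun y => essSup (F y) μ) ⁻¹' Set.Ioi c =
        {y | 0 < μ (Prod.mk y ⁻¹' {z | c < Function.uncurry F z})} :=
      Set.ext fun y => lt_essSup_iff_measure_pos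
    rw [hpreimage]
    exact measurableSet_lt measurable_const
      (measurable_measure_prodMk_left (measurableSet_lt measurable_const hF))
  simp only [eLpNorm_eq_lintegral_rpow_enorm_toReal hp_zero hp_top, enorm_eq_self]
  exact (hF.pow_const p.toReal).lintegral_prod_right'.pow_const _

theorem lintegral_mul_le_eLpNorm_mul_eLpNorm {p q : ℝ≥0∞} [ENNReal.HolderConjugate p q]
    {f g : X → ℝ≥0∞} (hf : Measurable f) (hg : Measurable g) :
    ∫⁻ x, f x * g x ∂μ ≤ eLpNorm f p μ * eLpNorm g q μ := by
  rcases eq_or_ne p ∞ with rfl | hp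
  · obtain rfl : q = 1 := (ENNReal.HolderConjugate.eq_top_iff_eq_one ∞ q).1 rfl
    simp only [eLpNorm_exponent_top, eLpNormEssSup_eq_essSup_enorm,
      eLpNorm_one_eq_lintegral_enorm, enorm_eq_self]
    rw [← lintegral_const_mul _ hg]
    exact lintegral_mono_ae ((ENNReal.ae_le_essSup f).mono fun x hx => by gcongr)
  rcases eq_or_ne q ∞ with rfl | hq
  · obtain rfl : p = 1 := (ENNReal.HolderConjugate.eq_top_iff_eq_one ∞ p).1 rfl
    simp only [eLpNorm_exponent_top, eLpNormEssSup_eq_essSup_enorm,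
      eLpNorm_one_eq_lintegral_enorm, enorm_eq_self]
    rw [← lintegral_mul_const _ hf]
    exact lintegral_mono_ae ((ENNReal.ae_le_essSup g).mono fun x hx => by gcongr)
  simp only [eLpNorm_eq_lintegral_rpow_enorm_toReal (ENNReal.HolderConjugate.ne_zero p q) hp,
    eLpNorm_eq_lintegral_rpow_enorm_toReal (ENNReal.HolderConjugate.ne_zero q p) hq, enorm_eq_self]
  exact ENNReal.lintegral_mul_le_Lp_mul_Lq μ (ENNReal.HolderConjugate.toReal_of_ne_top hp hq)
    hf.aemeasurable hg.aemeasurable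

/-- The indicator of `B` normalised to have integral `1`; it is not normalised if `B` has measure
`0` or `∞`, when its integral is `0`. -/
def normalizedIndicator (μ : Measure X) (B : Set X) : X → ℝ≥0∞ :=
  B.indicator fun _ => (μ B)⁻¹

theorem lintegral_normalizedIndicator_le_one {B : Set X} (hB : MeasurableSet B) :
    ∫⁻ x, normalizedIndicator μ B x ∂μ ≤ 1 := by
  simp only [normalizedIndicator, lintegral_indicator_const hB]
  exact ENNReal.inv_mul_le_one _

theorem le_lintegral_mul_normalizedIndicator {B : Set X} (hB : MeasurableSet B) (hB_pos : μ B ≠ 0)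
    (hB_fin : μ B ≠ ∞) {f : X → ℝ≥0∞} {c : ℝ≥0∞} (hc : ∀ x ∈ B, c ≤ f x) :
    c ≤ ∫⁻ x, f x * normalizedIndicator μ B x ∂μ :=
  calc c = ∫⁻ x, B.indicator (fun _ => c * (μ B)⁻¹) x ∂μ := by
        rw [lintegral_indicator_const hB, mul_assoc, ENNReal.inv_mul_cancel hB_pos hB_fin, mul_one]
    _ ≤ ∫⁻ x, f x * normalizedIndicator μ B x ∂μ := by
        refine lintegral_mono fun x => ?_
        rw [normalizedIndicator, ← Set.indicator_mul_right]
        exact Set.indicator_le_indicator' fun hx => mul_le_mul_left (hc x hx) _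

theorem measurable_uncurry_normalizedIndicator [SFinite μ] {A : Set (Y × X)}
    (hA : MeasurableSet A) :
    Measurable (Function.uncurry fun y => normalizedIndicator μ (Prod.mk y ⁻¹' A)) := by
  have hindicator : (Function.uncurry fun y => normalizedIndicator μ (Prod.mk y ⁻¹' A)) =
      A.indicator fun z => (μ (Prod.mk z.1 ⁻¹' A))⁻¹ := rfl
  rw [hindicator]
  exact ((measurable_measure_prodMk_left hA).inv.comp measurable_fst).indicator hA

theorem exists_spanningSets_inter_measure_ne_zero [SigmaFinite μ] {s : Set X} (hs : μ s ≠ 0) :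
    ∃ m, μ (s ∩ spanningSets μ m) ≠ 0 := by
  refine (exists_measure_pos_of_not_measure_iUnion_null ?_).imp fun _ h => h.ne'
  rwa [← Set.inter_iUnion, iUnion_spanningSets, Set.inter_univ]

/-- `f` cut off at height `k` and outside the `k`-th spanning set of `μ`. -/
def finiteTruncation (μ : Measure X) [SigmaFinite μ] (f : X → ℝ≥0∞) (k : ℕ) : X → ℝ≥0∞ :=
  (spanningSets μ k).indicator fun x => min (f x) k

theorem finiteTruncation_le [SigmaFinite μ] (f : X → ℝ≥0∞) (k : ℕ) (x : X) :
    finiteTruncation μ f k x ≤ f x :=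
  Set.indicator_apply_le' (fun _ => min_le_left _ _) fun _ => zero_le

theorem monotone_finiteTruncation [SigmaFinite μ] (f : X → ℝ≥0∞) :
    Monotone (finiteTruncation μ f) := fun _ _ hkl =>
  (Set.indicator_le_indicator_of_subset (monotone_spanningSets μ hkl) fun _ => zero_le).trans
    (Set.indicator_mono fun _ => min_le_min_left _ (Nat.cast_le.2 hkl))

theorem iSup_finiteTruncation [SigmaFinite μ] (f : X → ℝ≥0∞) (x : X) :
    ⨆ k, finiteTruncation μ f k x = f x := by
  refine le_antisymm (iSup_le fun k => finiteTruncation_le f k x) (le_of_forall_lt fun c hc => ?_)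
  obtain ⟨n, hn⟩ := ENNReal.exists_nat_gt hc.ne_top
  have hx : x ∈ spanningSets μ (max n (spanningSetsIndex μ x)) :=
    monotone_spanningSets μ (le_max_right _ _) (mem_spanningSetsIndex μ x)
  refine lt_of_lt_of_le ?_ (le_iSup _ (max n (spanningSetsIndex μ x)))
  rw [finiteTruncation, Set.indicator_of_mem hx]
  exact lt_min hc (hn.trans_le (Nat.cast_le.2 (le_max_left _ _)))

theorem measurable_uncurry_finiteTruncation [SigmaFinite μ] {F : Y → X → ℝ≥0∞}
    (hF : Measurable (Function.uncurry F)) (k : ℕ) :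
    Measurable (Function.uncurry fun y => finiteTruncation μ (F y) k) := by
  have hindicator : (Function.uncurry fun y => finiteTruncation μ (F y) k) =
      (Prod.snd ⁻¹' spanningSets μ k).indicator fun z => min (Function.uncurry F z) k := rfl
  rw [hindicator]
  exact (hF.min measurable_const).indicator (measurable_snd (measurableSet_spanningSets μ k))

theorem lintegral_finiteTruncation_rpow_ne_top [SigmaFinite μ] (f : X → ℝ≥0∞) (k : ℕ) {a : ℝ}
    (ha : 0 < a) : ∫⁻ x, finiteTruncation μ f k x ^ a ∂μ ≠ ∞ := by
  have hle (x : X) : finiteTruncation μ f k x ^ a ≤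
      (spanningSets μ k).indicator (fun _ => (k : ℝ≥0∞) ^ a) x := by
    by_cases hx : x ∈ spanningSets μ k
    · simp only [finiteTruncation, Set.indicator_of_mem hx]
      gcongr
      exact min_le_right _ _
    · simp only [finiteTruncation, Set.indicator_of_notMem hx, ENNReal.zero_rpow_of_pos ha, le_refl]
  refine ((lintegral_mono hle).trans_lt ?_).ne
  rw [lintegral_indicator_const (measurableSet_spanningSets μ k)]
  exact ENNReal.mul_lt_top (ENNReal.rpow_lt_top_of_nonneg ha.le (ENNReal.natCast_ne_top k))
    (measure_spanningSets_lt_top μ k)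

/-- The function on the unit sphere of `L^b` at which Hölder's inequality with `f ∈ L^a`, where
`1/a + 1/b = 1`, is an equality; it vanishes almost everywhere if `f` has norm `0` or `∞`. -/
def holderExtremal (μ : Measure X) (a b : ℝ) (f : X → ℝ≥0∞) (x : X) : ℝ≥0∞ :=
  (∫⁻ x, f x ^ a ∂μ) ^ (-(1 / b)) * f x ^ (a - 1)

theorem measurable_uncurry_holderExtremal [SFinite μ] (a b : ℝ) {F : Y → X → ℝ≥0∞}
    (hF : Measurable (Function.uncurry F)) :
    Measurable (Function.uncurry fun y => holderExtremal μ a b (F y)) :=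
  (((hF.pow_const a).lintegral_prod_right'.pow_const _).comp measurable_fst).mul
    (hF.pow_const (a - 1))

theorem lintegral_holderExtremal_rpow_le_one {a b : ℝ} (hab : a.HolderConjugate b)
    {f : X → ℝ≥0∞} (hf : Measurable f) : ∫⁻ x, holderExtremal μ a b f x ^ b ∂μ ≤ 1 := by
  have hpow (x : X) : holderExtremal μ a b f x ^ b = (∫⁻ x, f x ^ a ∂μ)⁻¹ * f x ^ a := by
    rw [holderExtremal, ENNReal.mul_rpow_of_nonneg _ _ hab.symm.nonneg, ← ENNReal.rpow_mul,
      ← ENNReal.rpow_mul, neg_mul, one_div_mul_cancel hab.symm.ne_zero, ENNReal.rpow_neg_one,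
      hab.sub_one_mul_conj]
  simp only [hpow]
  rw [lintegral_const_mul _ (hf.pow_const a)]
  exact ENNReal.inv_mul_le_one _

theorem lintegral_mul_holderExtremal {a b : ℝ} (hab : a.HolderConjugate b) {f : X → ℝ≥0∞}
    (hf : Measurable f) (hf_fin : ∫⁻ x, f x ^ a ∂μ ≠ ∞) :
    ∫⁻ x, f x * holderExtremal μ a b f x ∂μ = (∫⁻ x, f x ^ a ∂μ) ^ (1 / a) := by
  have hmul (x : X) : f x * holderExtremal μ a b f x =
      (∫⁻ x, f x ^ a ∂μ) ^ (-(1 / b)) * f x ^ a := by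
    have hsplit : f x ^ a = f x * f x ^ (a - 1) := by
      rw [← add_sub_cancel 1 a, ENNReal.rpow_add_of_nonneg _ _ zero_le_one hab.sub_one_pos.le,
        ENNReal.rpow_one, add_sub_cancel]
    rw [holderExtremal, hsplit, mul_left_comm]
  simp only [hmul]
  rw [lintegral_const_mul _ (hf.pow_const a)]
  rcases eq_or_ne (∫⁻ x, f x ^ a ∂μ) 0 with h_zero | h_zero
  · rw [h_zero, mul_zero, ENNReal.zero_rpow_of_pos (one_div_pos.2 hab.pos)]
  · have hexp : 1 / a = -(1 / b) + 1 := by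
      have := hab.inv_add_inv_eq_one
      simp only [one_div]
      linarith
    rw [hexp, ENNReal.rpow_add _ _ h_zero hf_fin, ENNReal.rpow_one]

theorem iSup_lintegral_rpow {a : ℝ} (ha : 0 < a) {f : ℕ → X → ℝ≥0∞} (hf : ∀ k, Measurable (f k))
    (hmono : Monotone f) :
    ⨆ k, (∫⁻ x, f k x ^ a ∂μ) ^ (1 / a) = (∫⁻ x, (⨆ k, f k x) ^ a ∂μ) ^ (1 / a) := by
  have map_iSup_rpow {c : ℝ} (hc : 0 < c) (u : ℕ → ℝ≥0∞) : (⨆ k, u k) ^ c = ⨆ k, u k ^ c :=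
    (ENNReal.orderIsoRpow c hc).map_iSup u
  simp only [map_iSup_rpow ha]
  rw [lintegral_iSup (fun k => (hf k).pow_const a)
    fun _ _ hkl x => ENNReal.rpow_le_rpow (hmono hkl x) ha.le, map_iSup_rpow (one_div_pos.2 ha)]

end Lebesgue

section LebesgueDuality

variable {X : Type u} [MeasurableSpace X] {μ : Measure X}

theorem isFunctionNorm_eLpNorm [SFinite μ] (p : ℝ≥0∞) :
    IsFunctionNorm μ fun f => eLpNorm f p μ where
  mono_ae hfg := eLpNorm_mono_enorm_ae hfg
  const_mul c _ hf := eLpNorm_ennreal_const_mul p c hf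
  measurable_uncurry hF := measurable_eLpNorm_uncurry p hF

variable {Y : Type u} [MeasurableSpace Y] [SigmaFinite μ] {F : Y → X → ℝ≥0∞}

theorem exists_norming_essSup (hF : Measurable (Function.uncurry F)) :
    ∃ G : ℕ → Y → X → ℝ≥0∞, (∀ k, Measurable (Function.uncurry (G k))) ∧
      (∀ k y, ∫⁻ x, G k y x ∂μ ≤ 1) ∧
      ∀ y, essSup (F y) μ ≤ ⨆ k, ∫⁻ x, F y x * G k y x ∂μ := by
  set c : ℕ → ℝ≥0∞ := TopologicalSpace.denseSeq ℝ≥0∞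
  set A : ℕ → ℕ → Set (Y × X) := fun i m =>
    {z | c i < Function.uncurry F z} ∩ Prod.snd ⁻¹' spanningSets μ m
  have hA (i m : ℕ) : MeasurableSet (A i m) :=
    (measurableSet_lt measurable_const hF).inter (measurable_snd (measurableSet_spanningSets μ m))
  have hslice (i m : ℕ) (y : Y) : MeasurableSet (Prod.mk y ⁻¹' A i m) :=
    measurable_prodMk_left (hA i m)
  refine ⟨fun k y => normalizedIndicator μ (Prod.mk y ⁻¹' A k.unpair.1 k.unpair.2),
    fun k => measurable_uncurry_normalizedIndicator (hA _ _),
    fun k y => lintegral_normalizedIndicator_le_one (hslice _ _ y), fun y => ?_⟩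
  refine le_of_forall_lt fun b hb => ?_
  obtain ⟨-, ⟨i, rfl⟩, hlt_c, hc_lt⟩ :=
    (TopologicalSpace.denseRange_denseSeq ℝ≥0∞).exists_between hb
  obtain ⟨m, hm⟩ := exists_spanningSets_inter_measure_ne_zero
    (lt_essSup_iff_measure_pos.1 hc_lt).ne'
  have hm_fin : μ (Prod.mk y ⁻¹' A i m) ≠ ∞ :=
    ((measure_mono Set.inter_subset_right).trans_lt (measure_spanningSets_lt_top μ m)).ne
  calc b < c i := hlt_c
    _ ≤ ∫⁻ x, F y x * normalizedIndicator μ (Prod.mk y ⁻¹' A i m) x ∂μ :=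
        le_lintegral_mul_normalizedIndicator (hslice i m y) hm hm_fin fun _ hx => hx.1.le
    _ ≤ _ := le_iSup_of_le (Nat.pair i m) (by simp only [Nat.unpair_pair, le_refl])

theorem exists_norming_lintegral_rpow {a b : ℝ} (hab : a.HolderConjugate b)
    (hF : Measurable (Function.uncurry F)) :
    ∃ G : ℕ → Y → X → ℝ≥0∞, (∀ k, Measurable (Function.uncurry (G k))) ∧
      (∀ k y, ∫⁻ x, G k y x ^ b ∂μ ≤ 1) ∧
      ∀ y, (∫⁻ x, F y x ^ a ∂μ) ^ (1 / a) ≤ ⨆ k, ∫⁻ x, F y x * G k y x ∂μ := by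
  set T : ℕ → Y → X → ℝ≥0∞ := fun k y => finiteTruncation μ (F y) k
  have hT (k : ℕ) : Measurable (Function.uncurry (T k)) :=
    measurable_uncurry_finiteTruncation hF k
  have hTy (k : ℕ) (y : Y) : Measurable (T k y) := (hT k).comp measurable_prodMk_left
  refine ⟨fun k y => holderExtremal μ a b (T k y),
    fun k => measurable_uncurry_holderExtremal a b (hT k),
    fun k y => lintegral_holderExtremal_rpow_le_one hab (hTy k y), fun y => ?_⟩
  calc (∫⁻ x, F y x ^ a ∂μ) ^ (1 / a)
      = ⨆ k, (∫⁻ x, T k y x ^ a ∂μ) ^ (1 / a) := by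
        simp only [iSup_lintegral_rpow hab.pos (fun k => hTy k y) (monotone_finiteTruncation (F y)),
          T, iSup_finiteTruncation]
    _ = ⨆ k, ∫⁻ x, T k y x * holderExtremal μ a b (T k y) x ∂μ :=
        iSup_congr fun k => (lintegral_mul_holderExtremal hab (hTy k y)
          (lintegral_finiteTruncation_rpow_ne_top (F y) k hab.pos)).symm
    _ ≤ ⨆ k, ∫⁻ x, F y x * holderExtremal μ a b (T k y) x ∂μ := by
        gcongr with k x
        exact finiteTruncation_le (F y) k x

theorem exists_norming_eLpNorm (p q : ℝ≥0∞) [ENNReal.HolderConjugate p q]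
    (hF : Measurable (Function.uncurry F)) :
    ∃ G : ℕ → Y → X → ℝ≥0∞, (∀ k, Measurable (Function.uncurry (G k))) ∧
      (∀ k y, eLpNorm (G k y) q μ ≤ 1) ∧
      ∀ y, eLpNorm (F y) p μ ≤ ⨆ k, ∫⁻ x, F y x * G k y x ∂μ := by
  rcases eq_or_ne p ∞ with rfl | hp
  · obtain rfl : q = 1 := (ENNReal.HolderConjugate.eq_top_iff_eq_one ∞ q).1 rfl
    simpa only [eLpNorm_exponent_top, eLpNormEssSup_eq_essSup_enorm,
      eLpNorm_one_eq_lintegral_enorm, enorm_eq_self] using exists_norming_essSup hF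
  rcases eq_or_ne q ∞ with rfl | hq
  · obtain rfl : p = 1 := (ENNReal.HolderConjugate.eq_top_iff_eq_one ∞ p).1 rfl
    refine ⟨fun _ _ _ => 1, fun _ => measurable_const, fun _ y => ?_, fun y => ?_⟩
    · simpa only [eLpNorm_exponent_top, eLpNormEssSup_eq_essSup_enorm, enorm_eq_self]
        using essSup_le_of_ae_le 1 (Eventually.of_forall fun _ => le_rfl)
    · simp only [eLpNorm_one_eq_lintegral_enorm, enorm_eq_self, mul_one, ciSup_const, le_refl]
  have hab := ENNReal.HolderConjugate.toReal_of_ne_top (p := p) hp hq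
  obtain ⟨G, hG, hG_le, hF_le⟩ := exists_norming_lintegral_rpow (μ := μ) hab hF
  refine ⟨G, hG, fun k y => ?_, fun y => ?_⟩
  · rw [eLpNorm_eq_lintegral_rpow_enorm_toReal (ENNReal.HolderConjugate.ne_zero q p) hq]
    exact ENNReal.rpow_le_one (hG_le k y) (one_div_nonneg.2 hab.symm.nonneg)
  · rw [eLpNorm_eq_lintegral_rpow_enorm_toReal (ENNReal.HolderConjugate.ne_zero p q) hp]
    exact hF_le y

theorem isDualPair_eLpNorm (p q : ℝ≥0∞) [ENNReal.HolderConjugate p q] :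
    IsDualPair μ (fun f => eLpNorm f p μ) fun f => eLpNorm f q μ where
  isFunctionNorm := isFunctionNorm_eLpNorm p
  dual_isFunctionNorm := isFunctionNorm_eLpNorm q
  lintegral_mul_le := lintegral_mul_le_eLpNorm_mul_eLpNorm
  exists_norming := exists_norming_eLpNorm p q

end LebesgueDuality

section Operations

variable {X X' : Type u} [MeasurableSpace X] [MeasurableSpace X'] {μ : Measure X}
  {μ' : Measure X'}

namespace IsFunctionNorm

variable {N : (X → ℝ≥0∞) → ℝ≥0∞}

theorem weight (hN : IsFunctionNorm μ N) {w : X → ℝ≥0∞} (hw : Measurable w) :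
    IsFunctionNorm μ fun f => N fun x => w x * f x where
  mono_ae hfg := hN.mono_ae <| hfg.mono fun _ hx => mul_le_mul_right hx _
  const_mul c f hf := by
    simpa only [mul_left_comm] using
      hN.const_mul c (f := fun x => w x * f x) (hw.mul hf)
  measurable_uncurry hF := hN.measurable_uncurry ((hw.comp measurable_snd).mul hF)

theorem restrict (hN : IsFunctionNorm μ N) {S : Set X} (hS : MeasurableSet S) :
    IsFunctionNorm (μ.restrict S) fun f => N (S.indicator f) where
  mono_ae hfg := hN.mono_ae <| ((ae_restrict_iff' hS).1 hfg).mono fun _ hx =>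
    Set.indicator_le_indicator' hx
  const_mul c f hf := by
    simpa only [← Set.indicator_const_mul] using hN.const_mul c (hf.indicator hS)
  measurable_uncurry hF := hN.measurable_uncurry (hF.indicator (measurable_snd hS))

theorem comp (hN : IsFunctionNorm μ N) {ψ : X → X'} (hψ : Measure.QuasiMeasurePreserving ψ μ μ') :
    IsFunctionNorm μ' fun f => N (f ∘ ψ) where
  mono_ae hfg := hN.mono_ae (hψ.ae hfg)
  const_mul c _ hf := hN.const_mul c (hf.comp hψ.measurable)
  measurable_uncurry hF := hN.measurable_uncurry (hF.comp (measurable_id.prodMap hψ.measurable))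

end IsFunctionNorm

namespace IsDualPair

variable {N N' : (X → ℝ≥0∞) → ℝ≥0∞}

theorem weight (h : IsDualPair μ N N') {w w' : X → ℝ≥0∞} (hw : Measurable w)
    (hw' : Measurable w') (hww' : ∀ x, w x * w' x = 1) :
    IsDualPair μ (fun f => N fun x => w x * f x) fun f => N' fun x => w' x * f x where
  isFunctionNorm := h.isFunctionNorm.weight hw
  dual_isFunctionNorm := h.dual_isFunctionNorm.weight hw'
  lintegral_mul_le {f g} hf hg := by
    have hcancel (x : X) : f x * g x = w x * f x * (w' x * g x) := by
      rw [mul_mul_mul_comm, hww', one_mul]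
    simp only [hcancel]
    exact h.lintegral_mul_le (hw.mul hf) (hw'.mul hg)
  exists_norming {Y _ F} hF := by
    obtain ⟨G, hG, hG_le, hF_le⟩ := h.exists_norming
      (F := fun y x => w x * F y x) ((hw.comp measurable_snd).mul hF)
    refine ⟨fun k y x => w x * G k y x, fun k => (hw.comp measurable_snd).mul (hG k),
      fun k y => ?_, fun y => ?_⟩
    · have hcancel (x : X) : w' x * (w x * G k y x) = G k y x := by
        rw [← mul_assoc, mul_comm (w' x), hww', one_mul]
      simpa only [hcancel] using hG_le k y
    · simpa only [mul_left_comm, mul_assoc] using hF_le y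

theorem restrict (h : IsDualPair μ N N') {S : Set X} (hS : MeasurableSet S) :
    IsDualPair (μ.restrict S) (fun f => N (S.indicator f)) fun f => N' (S.indicator f) where
  isFunctionNorm := h.isFunctionNorm.restrict hS
  dual_isFunctionNorm := h.dual_isFunctionNorm.restrict hS
  lintegral_mul_le {f g} hf hg := by
    rw [← lintegral_indicator hS]
    simpa only [Set.indicator_mul] using
      h.lintegral_mul_le (hf.indicator hS) (hg.indicator hS)
  exists_norming {Y _ F} hF := by
    obtain ⟨G, hG, hG_le, hF_le⟩ := h.exists_norming
      (F := fun y => S.indicator (F y)) (hF.indicator (measurable_snd hS))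
    refine ⟨G, hG, fun k y => ?_, fun y => ?_⟩
    · exact (h.dual_isFunctionNorm.mono (Set.indicator_le_self S _)).trans (hG_le k y)
    · simpa only [← lintegral_indicator hS, Set.indicator_mul_left] using hF_le y

theorem comp (h : IsDualPair μ N N') {ψ : X → X'} {φ : X' → X} (hψ : MeasurePreserving ψ μ μ')
    (hφ : Measurable φ) (hφψ : φ ∘ ψ =ᵐ[μ] id) :
    IsDualPair μ' (fun f => N (f ∘ ψ)) fun f => N' (f ∘ ψ) where
  isFunctionNorm := h.isFunctionNorm.comp hψ.quasiMeasurePreserving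
  dual_isFunctionNorm := h.dual_isFunctionNorm.comp hψ.quasiMeasurePreserving
  lintegral_mul_le hf hg := by
    refine (hψ.lintegral_comp (hf.mul hg)).symm.trans_le ?_
    exact h.lintegral_mul_le (hf.comp hψ.measurable) (hg.comp hψ.measurable)
  exists_norming {Y _ F} hF := by
    obtain ⟨G, hG, hG_le, hF_le⟩ := h.exists_norming
      (F := fun y => F y ∘ ψ) (hF.comp (measurable_id.prodMap hψ.measurable))
    have hGφ (k : ℕ) : Measurable (Function.uncurry fun y => G k y ∘ φ) :=
      (hG k).comp (measurable_id.prodMap hφ)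
    have hGφψ (k : ℕ) (y : Y) : (G k y ∘ φ) ∘ ψ =ᵐ[μ] G k y := hφψ.fun_comp (G k y)
    refine ⟨fun k y => G k y ∘ φ, hGφ, fun k y => ?_, fun y => (hF_le y).trans_eq ?_⟩
    · exact (h.dual_isFunctionNorm.congr_ae (hGφψ k y)).trans_le (hG_le k y)
    · refine iSup_congr fun k => Eq.trans ?_
        (hψ.lintegral_comp ((hF.mul (hGφ k)).comp measurable_prodMk_left))
      exact lintegral_congr_ae ((hGφψ k y).mono fun x hx => congrArg (F y (ψ x) * ·) hx.symm)

end IsDualPair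

section Fiberwise

variable {ι : Type u} [Countable ι] [MeasurableSpace ι] [MeasurableSingletonClass ι] {κ : X → ι}

theorem measurableSet_graph_prodMk (hκ : Measurable κ) :
    MeasurableSet {z : ι × X | κ z.2 = z.1} :=
  measurableSet_eq_fun (hκ.comp measurable_snd) measurable_fst

theorem measurePreserving_snd_restrict_graph [SFinite μ] (hκ : Measurable κ) :
    MeasurePreserving Prod.snd ((Measure.count.prod μ).restrict {z : ι × X | κ z.2 = z.1}) μ := by
  refine ⟨measurable_snd, Measure.ext fun A hA => ?_⟩
  have hfiber (i : ι) : MeasurableSet (κ ⁻¹' {i}) := hκ (measurableSet_singleton i)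
  calc ((Measure.count.prod μ).restrict {z : ι × X | κ z.2 = z.1}).map Prod.snd A
      = ∑' i, μ (A ∩ κ ⁻¹' {i}) := by
        rw [Measure.map_apply measurable_snd hA, Measure.restrict_apply (measurable_snd hA),
          Measure.prod_apply ((measurable_snd hA).inter (measurableSet_graph_prodMk hκ)),
          lintegral_count]
        rfl
    _ = μ (⋃ i, A ∩ κ ⁻¹' {i}) :=
        (measure_iUnion (fun i j hij => ((Set.disjoint_singleton.2 hij).preimage κ).mono
          Set.inter_subset_right Set.inter_subset_right) fun i => hA.inter (hfiber i)).symm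
    _ = μ A := by
        rw [← Set.inter_iUnion, ← Set.preimage_iUnion, Set.iUnion_of_singleton, Set.preimage_univ,
          Set.inter_univ]

-- The fibrewise norm is the mixed norm on `ι × X` transported from the graph of `κ`.
theorem IsDualPair.fiberwise [SFinite μ] {N N' : (X → ℝ≥0∞) → ℝ≥0∞} {M M' : (ι → ℝ≥0∞) → ℝ≥0∞}
    (hM : IsDualPair Measure.count M M') (hN : IsDualPair μ N N') (hκ : Measurable κ) :
    IsDualPair μ (fun f => M fun i => N ((κ ⁻¹' {i}).indicator f))
      fun f => M' fun i => N' ((κ ⁻¹' {i}).indicator f) :=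
  ((hM.prod hN).restrict (measurableSet_graph_prodMk hκ)).comp
    (measurePreserving_snd_restrict_graph hκ) (hκ.prodMk measurable_id) <|
    (ae_restrict_mem (measurableSet_graph_prodMk hκ)).mono fun _ hz => Prod.ext hz rfl

end Fiberwise

theorem IsFunctionNorm.apply [Subsingleton X] [NeZero μ] (x₀ : X) :
    IsFunctionNorm μ fun f => f x₀ where
  mono_ae hfg := by
    obtain ⟨x, hx⟩ := hfg.exists
    rwa [Subsingleton.elim x₀ x]
  const_mul _ _ _ := rfl
  measurable_uncurry hF := hF.comp measurable_prodMk_right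

theorem IsDualPair.apply [Subsingleton X] [IsProbabilityMeasure μ] (x₀ : X) :
    IsDualPair μ (fun f => f x₀) fun f => f x₀ := by
  have hlintegral (f : X → ℝ≥0∞) : ∫⁻ x, f x ∂μ = f x₀ := by
    simp only [Subsingleton.elim _ x₀, lintegral_const, measure_univ, mul_one]
  refine ⟨.apply x₀, .apply x₀, fun _ _ => (hlintegral _).le, fun _ => ?_⟩
  exact ⟨fun _ _ _ => 1, fun _ => measurable_const, fun _ _ => le_rfl,
    fun y => by simp only [hlintegral, mul_one, ciSup_const, le_refl]⟩

end Operations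

section HerzNorm

theorem mem_herzRing_iff {k : ℤ} {x : ℝ} :
    x ∈ herzRing k ↔ (2 : ℝ) ^ (k - 1) ≤ |x| ∧ |x| < (2 : ℝ) ^ k := by
  rw [herzRing, Set.mem_sdiff, Set.mem_Ioo, Set.mem_Ioo, ← abs_lt, ← abs_lt, not_lt, and_comm]

theorem measurableSet_herzRing (k : ℤ) : MeasurableSet (herzRing k) :=
  measurableSet_Ioo.diff measurableSet_Ioo

/-- The index of the dyadic annulus containing `x`. The value at `x = 0`, which lies in no annulus,
is junk. -/
def herzIndex (x : ℝ) : ℤ :=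
  ⌊Real.logb 2 x⌋ + 1

theorem measurable_herzIndex : Measurable herzIndex :=
  ((Real.measurable_log.div_const _).floor).add_const 1

theorem mem_herzRing_iff_herzIndex_eq {k : ℤ} {x : ℝ} (hx : x ≠ 0) :
    x ∈ herzRing k ↔ herzIndex x = k := by
  have hx_pos : 0 < |x| := abs_pos.2 hx
  rw [herzIndex, ← eq_sub_iff_add_eq, Int.floor_eq_iff, ← Real.logb_abs,
    Real.le_logb_iff_rpow_le one_lt_two hx_pos, Int.cast_sub, Int.cast_one, sub_add_cancel,
    Real.logb_lt_iff_lt_rpow one_lt_two hx_pos, Real.rpow_intCast, mem_herzRing_iff,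
    ← Real.rpow_intCast 2 (k - 1), Int.cast_sub, Int.cast_one]

theorem herzRing_ae_eq_preimage_herzIndex (k : ℤ) :
    herzRing k =ᵐ[volume] herzIndex ⁻¹' {k} := by
  filter_upwards [Measure.ae_ne volume 0] with x hx
  exact propext (mem_herzRing_iff_herzIndex_eq hx)

theorem lpZNorm_eq_eLpNorm {p : ℝ≥0∞} (hp : p ≠ 0) (a : ℤ → ℝ≥0∞) :
    lpZNorm p a = eLpNorm a p Measure.count := by
  rcases eq_or_ne p ∞ with rfl | hp_top
  · simp only [lpZNorm, if_true, eLpNorm_exponent_top, eLpNormEssSup_eq_essSup_enorm,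
      enorm_eq_self, essSup_count]
  · simp only [lpZNorm, if_neg hp_top, eLpNorm_eq_lintegral_rpow_enorm_toReal hp hp_top,
      enorm_eq_self, lintegral_count]

theorem lqNormOn_eq_eLpNorm_indicator {q : ℝ≥0∞} (hq : q ≠ 0) {s : Set ℝ} (hs : MeasurableSet s)
    (g : ℝ → ℝ≥0∞) : lqNormOn q s g = eLpNorm (s.indicator g) q volume := by
  rcases eq_or_ne q ∞ with rfl | hq_top
  · simp only [lqNormOn, if_true, eLpNorm_exponent_top, eLpNormEssSup_eq_essSup_enorm,
      enorm_eq_self]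
  · simp only [lqNormOn, if_neg hq_top, eLpNorm_indicator_eq_eLpNorm_restrict hs,
      eLpNorm_eq_lintegral_rpow_enorm_toReal hq hq_top, enorm_eq_self]

/-- The weight `2 ^ (k α)` which the Herz norm attaches to the `k`-th annulus. -/
def herzWeight (α : ℝ) (k : ℤ) : ℝ≥0∞ :=
  ENNReal.ofReal ((2 : ℝ) ^ ((k : ℝ) * α))

theorem herzWeight_mul_herzWeight_neg (α : ℝ) (k : ℤ) :
    herzWeight α k * herzWeight (-α) k = 1 := by
  rw [herzWeight, herzWeight, ← ENNReal.ofReal_mul (by positivity), ← Real.rpow_add two_pos,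
    mul_neg, add_neg_cancel, Real.rpow_zero, ENNReal.ofReal_one]

theorem herzNorm1_eq_eLpNorm (α : ℝ) {p q : ℝ≥0∞} (hp : p ≠ 0) (hq : q ≠ 0) (g : ℝ → ℝ≥0∞) :
    herzNorm1 α p q g = eLpNorm (fun k => herzWeight α k *
      eLpNorm ((herzIndex ⁻¹' {k}).indicator g) q volume) p Measure.count := by
  have hannulus (k : ℤ) : lqNormOn q (herzRing k) g =
      eLpNorm ((herzIndex ⁻¹' {k}).indicator g) q volume := by
    rw [lqNormOn_eq_eLpNorm_indicator hq (measurableSet_herzRing k)]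
    exact eLpNorm_congr_ae (indicator_ae_eq_of_ae_eq_set (herzRing_ae_eq_preimage_herzIndex k))
  simp only [herzNorm1, lpZNorm_eq_eLpNorm hp, hannulus, herzWeight]

theorem isDualPair_herzNorm1 (α : ℝ) (p p' q q' : ℝ≥0∞) [ENNReal.HolderConjugate p p']
    [ENNReal.HolderConjugate q q'] :
    IsDualPair volume (herzNorm1 α p q) (herzNorm1 (-α) p' q') := by
  have h := ((isDualPair_eLpNorm (μ := Measure.count) p p').weight (measurable_from_top)
    measurable_from_top (herzWeight_mul_herzWeight_neg α)).fiberwise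
      (isDualPair_eLpNorm (μ := volume) q q') measurable_herzIndex
  convert h using 1
  · exact funext fun g => herzNorm1_eq_eLpNorm α (ENNReal.HolderConjugate.ne_zero p p')
      (ENNReal.HolderConjugate.ne_zero q q') g
  · exact funext fun g => herzNorm1_eq_eLpNorm (-α) (ENNReal.HolderConjugate.ne_zero p' p)
      (ENNReal.HolderConjugate.ne_zero q' q) g

theorem measurePreserving_snoc (n : ℕ) :
    MeasurePreserving (fun z : ℝ × (Fin n → ℝ) => (Fin.snoc z.2 z.1 : Fin (n + 1) → ℝ))
      (volume.prod volume) volume := by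
  have hsnoc : (MeasurableEquiv.piFinSuccAbove (fun _ => ℝ) (Fin.last n)).symm =
      fun z : ℝ × (Fin n → ℝ) => (Fin.snoc z.2 z.1 : Fin (n + 1) → ℝ) :=
    funext fun z => Fin.insertNth_last (α := fun _ => ℝ) z.1 z.2
  exact hsnoc ▸ (volume_preserving_piFinSuccAbove (fun _ => ℝ) (Fin.last n)).symm

theorem isDualPair_mixedHerzNormE (n : ℕ) (α : Fin n → ℝ) (p p' q q' : Fin n → ℝ≥0∞)
    [∀ i, ENNReal.HolderConjugate (p i) (p' i)] [∀ i, ENNReal.HolderConjugate (q i) (q' i)] :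
    IsDualPair volume (mixedHerzNormE n α p q) (mixedHerzNormE n (-α) p' q') := by
  induction n with
  | zero =>
    have : IsProbabilityMeasure (volume : Measure (Fin 0 → ℝ)) := ⟨by simp [volume_pi]⟩
    exact .apply _
  | succ n ih =>
    have : ∀ i, ENNReal.HolderConjugate (Fin.init p i) (Fin.init p' i) := fun i =>
      inferInstanceAs (ENNReal.HolderConjugate (p i.castSucc) (p' i.castSucc))
    have : ∀ i, ENNReal.HolderConjugate (Fin.init q i) (Fin.init q' i) := fun i =>
      inferInstanceAs (ENNReal.HolderConjugate (q i.castSucc) (q' i.castSucc))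
    have hsplit : Measurable fun x : Fin (n + 1) → ℝ => (x (Fin.last n), Fin.init x) :=
      (measurable_pi_apply _).prodMk (measurable_pi_lambda _ fun i => measurable_pi_apply _)
    have hsplit_snoc : (fun x : Fin (n + 1) → ℝ => (x (Fin.last n), Fin.init x)) ∘
        (fun z : ℝ × (Fin n → ℝ) => (Fin.snoc z.2 z.1 : Fin (n + 1) → ℝ)) = id :=
      funext fun z =>
        Prod.ext (Fin.snoc_last (α := fun _ => ℝ) _ _) (Fin.init_snoc (α := fun _ => ℝ) _ _)
    have hpair := (isDualPair_herzNorm1 (α (Fin.last n)) (p (Fin.last n)) (p' (Fin.last n))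
      (q (Fin.last n)) (q' (Fin.last n))).prod (ih (Fin.init α) (Fin.init p) (Fin.init p')
        (Fin.init q) (Fin.init q'))
    exact (hpair.comp (measurePreserving_snoc n) hsplit (.of_eq hsplit_snoc) :)

end HerzNorm

section NormDuality

variable {X : Type u} [MeasurableSpace X] {μ : Measure X} {N N' : (X → ℝ≥0∞) → ℝ≥0∞}
  {𝕜 : Type*} [RCLike 𝕜]

theorem lintegral_mul_eq_iSup_lintegral_mul_inf_natCast {f u : X → ℝ≥0∞} (hf : Measurable f)
    (hu : Measurable u) : ∫⁻ x, f x * u x ∂μ = ⨆ m : ℕ, ∫⁻ x, f x * (u x ⊓ m) ∂μ := by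
  have hmono : Monotone fun (m : ℕ) x => f x * (u x ⊓ m) := fun _ _ hml x =>
    mul_le_mul_right (inf_le_inf_left _ (Nat.cast_le.2 hml)) _
  refine .trans ?_ (lintegral_iSup (fun m => hf.mul (hu.inf measurable_const)) hmono)
  simp only [← ENNReal.mul_iSup, ← inf_iSup_eq, ENNReal.iSup_natCast, inf_top_eq]

theorem IsFunctionNorm.exists_normalization (hN : IsFunctionNorm μ N) {v : X → ℝ≥0∞}
    (hv : Measurable v) (hv_top : ∀ x, v x ≠ ∞) (hNv : N v ≠ 0) (hNv_le : N v ≤ 1) :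
    ∃ g : X → 𝕜, Measurable g ∧ N (fun x => ‖g x‖ₑ) = 1 ∧ ∀ x, v x ≤ ‖g x‖ₑ := by
  have henorm (x : X) : ‖(((N v)⁻¹ * v x).toReal : 𝕜)‖ₑ = (N v)⁻¹ * v x := by
    rw [← ofReal_norm, RCLike.norm_of_nonneg ENNReal.toReal_nonneg,
      ENNReal.ofReal_toReal (ENNReal.mul_ne_top (ENNReal.inv_ne_top.2 hNv) (hv_top x))]
  refine ⟨fun x => (((N v)⁻¹ * v x).toReal : 𝕜),
    RCLike.measurable_ofReal.comp (hv.const_mul _).ennreal_toReal, ?_, fun x => ?_⟩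
  · simp only [henorm]
    rw [hN.const_mul _ hv, ENNReal.inv_mul_cancel hNv (ne_top_of_le_ne_top one_ne_top hNv_le)]
  · rw [henorm]
    exact le_mul_of_one_le_left' (ENNReal.one_le_inv.2 hNv_le)

theorem IsDualPair.lintegral_mul_le_iSup (h : IsDualPair μ N N') {f : X → 𝕜} (hf : Measurable f)
    {v : X → ℝ≥0∞} (hv : Measurable v) (hv_top : ∀ x, v x ≠ ∞) (hv_le : N' v ≤ 1) :
    ∫⁻ x, ‖f x‖ₑ * v x ∂μ ≤
      ⨆ (g : X → 𝕜) (_ : Measurable g) (_ : N' (fun x => ‖g x‖ₑ) = 1), ∫⁻ x, ‖f x * g x‖ₑ ∂μ := by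
  rcases eq_or_ne (N' v) 0 with hv_zero | hv_ne
  · have hHolder := h.lintegral_mul_le hf.enorm hv
    rw [hv_zero, mul_zero] at hHolder
    exact hHolder.trans zero_le
  · obtain ⟨g, hg, hg_one, hvg⟩ :=
      h.dual_isFunctionNorm.exists_normalization (𝕜 := 𝕜) hv hv_top hv_ne hv_le
    refine le_iSup_of_le g (le_iSup_of_le hg (le_iSup_of_le hg_one ?_))
    simp only [enorm_mul]
    gcongr with x
    exact hvg x

theorem IsDualPair.eq_iSup_lintegral_enorm_mul (h : IsDualPair μ N N') {f : X → 𝕜}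
    (hf : Measurable f) :
    N (fun x => ‖f x‖ₑ) =
      ⨆ (g : X → 𝕜) (_ : Measurable g) (_ : N' (fun x => ‖g x‖ₑ) = 1), ∫⁻ x, ‖f x * g x‖ₑ ∂μ := by
  refine le_antisymm ?_ (iSup_le fun g => iSup_le fun hg => iSup_le fun hg_one => ?_)
  · obtain ⟨G, hG, hG_le, hf_le⟩ := h.exists_norming (Y := PUnit.{u + 1})
      (F := fun _ x => ‖f x‖ₑ) (hf.enorm.comp measurable_snd)
    refine (hf_le ⟨⟩).trans (iSup_le fun k => ?_)
    have hGk : Measurable (G k ⟨⟩) := (hG k).comp measurable_prodMk_left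
    -- A norming function may take the value `∞`, which a `𝕜`-valued one cannot.
    rw [lintegral_mul_eq_iSup_lintegral_mul_inf_natCast hf.enorm hGk]
    exact iSup_le fun m => h.lintegral_mul_le_iSup hf (hGk.inf measurable_const)
      (fun x => ne_top_of_le_ne_top (ENNReal.natCast_ne_top m) inf_le_right)
      ((h.dual_isFunctionNorm.mono fun x => inf_le_left).trans (hG_le k ⟨⟩))
  · simp only [enorm_mul]
    exact (h.lintegral_mul_le hf.enorm hg.enorm).trans_eq (by rw [hg_one, mul_one])

end NormDuality

theorem mixedHerz_norm_dual_general {𝕜 : Type*} [RCLike 𝕜] (n : ℕ) (α : Fin n → ℝ)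
    (p q p' q' : Fin n → ℝ≥0∞)
    (hp' : ∀ i, 1 / p i + 1 / p' i = 1) (hq' : ∀ i, 1 / q i + 1 / q' i = 1)
    (f : (Fin n → ℝ) → 𝕜) (hf : Measurable f) :
    mixedHerzNormE n α p q (fun x => ‖f x‖ₑ) =
      ⨆ (g : (Fin n → ℝ) → 𝕜) (_ : Measurable g)
        (_ : mixedHerzNormE n (-α) p' q' (fun x => ‖g x‖ₑ) = 1), ∫⁻ x, ‖f x * g x‖ₑ := by
  simp only [one_div, ← ENNReal.holderConjugate_iff] at hp' hq'
  exact (isDualPair_mixedHerzNormE n α p p' q q').eq_iSup_lintegral_enorm_mul hf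

/-- the norm duality formula for mixed-norm Herz spaces. -/
theorem mixedHerz_norm_dual (n : ℕ) (α : Fin n → ℝ) (p q p' q' : Fin n → ℝ≥0∞)
    (hp : ∀ i, 1 ≤ p i) (hq : ∀ i, 1 ≤ q i)
    (hp' : ∀ i, 1 / p i + 1 / p' i = 1) (hq' : ∀ i, 1 / q i + 1 / q' i = 1)
    (f : (Fin n → ℝ) → ℂ) (hf : Measurable f) (hfin : herzNormC n α p q f ≠ ∞) :
    herzNormC n α p q f =
      ⨆ (g : (Fin n → ℝ) → ℂ) (_ : Measurable g) (_ : herzNormC n (-α) p' q' g = 1),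
        ∫⁻ x, (‖f x * g x‖₊ : ℝ≥0∞) :=
  mixedHerz_norm_dual_general n α p q p' q' hp' hq' f hf
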